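/- The left maximal solution g of (1 − (3/4)z g − z² g') g = 1 with g(z₀) = g₀ > 0, extended to z = 0 by g(0) = 1, is C^∞ on [0, z₀]. -/

import Mathlib

open Set Filter

/-!
Put `F (x, y) = 1 - 1 / y - (3 / 4) x y`, so that the equation reads `x² g' = F (x, g)` with
`∂F/∂y (0, 1) = 1 > 0`. Differentiating, `v = g'` solves the linear equation
`x² v' = (∂F/∂y (x, g) - 2 x) v + ∂F/∂x (x, g)`, whose leading coefficient is still positive at `0`.
Positivity makes every solution of such an equation converge as `x → 0⁺`: the homogeneous
solutions behave like `exp (-c / x)`. Hence `g'` extends continuously to `0`, and the same argument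
applied to `v`, `v'`, … gains one derivative at a time.
-/

section SingularODE

open scoped Topology

section Limit

variable {a b w φ φ' : ℝ → ℝ} {c : ℝ}

-- The model case is `φ x = -1 / x`: a homogeneous solution grows at least like `exp (c φ)`, so a
-- weighted `w ^ 2 - ε ^ 2` is monotone as soon as the forcing term satisfies `|b| ≤ c ε`.
theorem monotoneOn_sq_sub_sq_mul_exp_neg {p q ε : ℝ} (hc : 0 ≤ c)
    (ha : ∀ x ∈ Ioo p q, c ≤ a x) (hb : ∀ x ∈ Ioo p q, |b x| ≤ c * ε)
    (hφ' : ∀ x ∈ Ioo p q, 0 ≤ φ' x) (hφ : ∀ x ∈ Ioo p q, HasDerivAt φ (φ' x) x)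
    (hw : ∀ x ∈ Ioo p q, HasDerivAt w (φ' x * (a x * w x + b x)) x) :
    MonotoneOn (fun x ↦ (w x ^ 2 - ε ^ 2) * Real.exp (-(c * φ x))) (Ioo p q) := by
  have hderiv : ∀ x ∈ Ioo p q, HasDerivAt (fun x ↦ (w x ^ 2 - ε ^ 2) * Real.exp (-(c * φ x)))
      (φ' x * (2 * w x * (a x * w x + b x) - c * (w x ^ 2 - ε ^ 2)) * Real.exp (-(c * φ x))) x := by
    intro x hx
    refine ((((hw x hx).pow 2).sub_const (ε ^ 2)).mul
      (((hφ x hx).const_mul c).neg.exp)).congr_deriv ?_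
    simp only [Pi.pow_apply, Pi.neg_apply]
    ring
  refine monotoneOn_of_hasDerivWithinAt_nonneg (convex_Ioo p q)
    (fun x hx ↦ (hderiv x hx).continuousAt.continuousWithinAt)
    (fun x hx ↦ (hderiv x (interior_subset hx)).hasDerivWithinAt) fun x hx ↦ ?_
  rw [interior_Ioo] at hx
  have hcross : -(2 * (c * ε) * |w x|) ≤ 2 * b x * w x := by
    have := mul_le_mul_of_nonneg_right (hb x hx) (abs_nonneg (w x))
    rw [← abs_mul] at this
    linarith [neg_abs_le (b x * w x)]
  have hquad : 0 ≤ 2 * w x * (a x * w x + b x) - c * (w x ^ 2 - ε ^ 2) := by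
    calc 0 ≤ c * (|w x| - ε) ^ 2 := by positivity
      _ = 2 * c * w x ^ 2 - 2 * (c * ε) * |w x| - c * (w x ^ 2 - ε ^ 2) := by
        rw [← sq_abs (w x)]; ring
      _ ≤ 2 * a x * w x ^ 2 + 2 * b x * w x - c * (w x ^ 2 - ε ^ 2) := by
        linarith [mul_le_mul_of_nonneg_right (ha x hx) (sq_nonneg (w x))]
      _ = 2 * w x * (a x * w x + b x) - c * (w x ^ 2 - ε ^ 2) := by ring
  exact mul_nonneg (mul_nonneg (hφ' x hx) hquad) (Real.exp_pos _).le

variable {x₀ : ℝ}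

theorem tendsto_zero_of_hasDerivAt_linear (hc : 0 < c) (ha : ∀ᶠ x in 𝓝[>] x₀, c ≤ a x)
    (hb : Tendsto b (𝓝[>] x₀) (𝓝 0)) (hφ_lim : Tendsto φ (𝓝[>] x₀) atBot)
    (hφ' : ∀ᶠ x in 𝓝[>] x₀, 0 ≤ φ' x) (hφ : ∀ᶠ x in 𝓝[>] x₀, HasDerivAt φ (φ' x) x)
    (hw : ∀ᶠ x in 𝓝[>] x₀, HasDerivAt w (φ' x * (a x * w x + b x)) x) :
    Tendsto w (𝓝[>] x₀) (𝓝 0) := by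
  rw [Metric.tendsto_nhds]
  intro ε hε
  have hb_small : ∀ᶠ x in 𝓝[>] x₀, |b x| ≤ c * (ε / 2) := by
    have := (tendsto_zero_iff_abs_tendsto_zero b).1 hb
    exact (this.eventually_lt_const (by positivity)).mono fun _ h ↦ h.le
  obtain ⟨q, hq, hsub⟩ := mem_nhdsGT_iff_exists_Ioo_subset.1
    (ha.and (hb_small.and (hφ'.and (hφ.and hw))))
  have hmono := monotoneOn_sq_sub_sq_mul_exp_neg (ε := ε / 2) hc.le (fun x hx ↦ (hsub hx).1)
    (fun x hx ↦ (hsub hx).2.1) (fun x hx ↦ (hsub hx).2.2.1) (fun x hx ↦ (hsub hx).2.2.2.1)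
    (fun x hx ↦ (hsub hx).2.2.2.2)
  obtain ⟨r, hr⟩ := exists_between (mem_Ioi.1 hq)
  set C := (w r ^ 2 - (ε / 2) ^ 2) * Real.exp (-(c * φ r))
  have hdecay : Tendsto (fun x ↦ C * Real.exp (c * φ x)) (𝓝[>] x₀) (𝓝 0) := by
    simpa using (Real.tendsto_exp_atBot.comp (hφ_lim.const_mul_atBot hc)).const_mul C
  filter_upwards [hdecay.eventually_lt_const (show 0 < ε ^ 2 - (ε / 2) ^ 2 by nlinarith),
    Ioo_mem_nhdsGT hr.1] with x hCx hx
  have hbound : w x ^ 2 - (ε / 2) ^ 2 ≤ C * Real.exp (c * φ x) := by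
    have hle : (w x ^ 2 - (ε / 2) ^ 2) * Real.exp (-(c * φ x)) ≤ C :=
      hmono ⟨hx.1, hx.2.trans hr.2⟩ hr hx.2.le
    rwa [Real.exp_neg, ← div_eq_mul_inv, div_le_iff₀ (Real.exp_pos _)] at hle
  rw [Real.dist_0_eq_abs]
  exact abs_lt_of_sq_lt_sq (by linarith) hε.le

theorem tendsto_neg_div_of_hasDerivAt_linear {a₀ b₀ : ℝ} (ha₀ : 0 < a₀)
    (ha : Tendsto a (𝓝[>] x₀) (𝓝 a₀)) (hb : Tendsto b (𝓝[>] x₀) (𝓝 b₀))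
    (hφ_lim : Tendsto φ (𝓝[>] x₀) atBot)
    (hφ' : ∀ᶠ x in 𝓝[>] x₀, 0 ≤ φ' x) (hφ : ∀ᶠ x in 𝓝[>] x₀, HasDerivAt φ (φ' x) x)
    (hw : ∀ᶠ x in 𝓝[>] x₀, HasDerivAt w (φ' x * (a x * w x + b x)) x) :
    Tendsto w (𝓝[>] x₀) (𝓝 (-b₀ / a₀)) := by
  have ha_ge : ∀ᶠ x in 𝓝[>] x₀, a₀ / 2 ≤ a x :=
    (ha.eventually_const_lt (half_lt_self ha₀)).mono fun _ h ↦ h.le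
  have hb_lim : Tendsto (fun x ↦ b x + a x * (-b₀ / a₀)) (𝓝[>] x₀) (𝓝 0) := by
    convert hb.add (ha.mul_const (-b₀ / a₀)) using 2
    field_simp
    ring
  have hshift : Tendsto (fun x ↦ w x - -b₀ / a₀) (𝓝[>] x₀) (𝓝 0) := by
    refine tendsto_zero_of_hasDerivAt_linear (half_pos ha₀) ha_ge hb_lim hφ_lim hφ' hφ ?_
    filter_upwards [hw] with x hx
    exact (hx.sub_const _).congr_deriv (by ring)
  exact tendsto_sub_nhds_zero_iff.1 hshift

theorem hasDerivAt_neg_inv_mul_pow (m : ℕ) {x : ℝ} (hx : x ≠ 0) :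
    HasDerivAt (fun x : ℝ ↦ -((m + 1) * x ^ (m + 1))⁻¹) (x ^ (m + 2))⁻¹ x := by
  have hm : (m + 1 : ℝ) ≠ 0 := by positivity
  refine (((hasDerivAt_pow (m + 1) x).const_mul (m + 1 : ℝ)).inv
    (by positivity)).neg.congr_deriv ?_
  push_cast
  field_simp
  ring

theorem tendsto_neg_inv_mul_pow_nhdsGT_zero (m : ℕ) :
    Tendsto (fun x : ℝ ↦ -((m + 1) * x ^ (m + 1))⁻¹) (𝓝[>] 0) atBot := by
  have hm : (0 : ℝ) < m + 1 := by positivity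
  refine tendsto_neg_atTop_atBot.comp (tendsto_inv_nhdsGT_zero.comp
    (tendsto_nhdsWithin_iff.2 ⟨?_, ?_⟩))
  · have : Continuous fun x : ℝ ↦ (m + 1) * x ^ (m + 1) := by fun_prop
    simpa using (this.tendsto 0).mono_left nhdsWithin_le_nhds
  · filter_upwards [self_mem_nhdsWithin] with x hx
    exact mul_pos hm (pow_pos hx _)

theorem tendsto_neg_div_of_hasDerivAt_linear_div_pow (m : ℕ) {a₀ b₀ : ℝ} (ha₀ : 0 < a₀)
    (ha : Tendsto a (𝓝[>] 0) (𝓝 a₀)) (hb : Tendsto b (𝓝[>] 0) (𝓝 b₀))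
    (hw : ∀ᶠ x in 𝓝[>] 0, HasDerivAt w ((a x * w x + b x) / x ^ (m + 2)) x) :
    Tendsto w (𝓝[>] 0) (𝓝 (-b₀ / a₀)) := by
  refine tendsto_neg_div_of_hasDerivAt_linear ha₀ ha hb
    (tendsto_neg_inv_mul_pow_nhdsGT_zero m) ?_ ?_ ?_ (φ' := fun x ↦ (x ^ (m + 2))⁻¹)
  · filter_upwards [self_mem_nhdsWithin] with x hx
    exact inv_nonneg.2 (pow_nonneg (le_of_lt hx) _)
  · filter_upwards [self_mem_nhdsWithin] with x hx
    exact hasDerivAt_neg_inv_mul_pow m (ne_of_gt hx)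
  · simpa only [div_eq_inv_mul] using hw

end Limit

theorem hasDerivWithinAt_Icc_left_of_tendsto {E : Type*} [NormedAddCommGroup E] [NormedSpace ℝ E]
    {p q : ℝ} (hpq : p < q) {u v : ℝ → E} {e : E} (hu : ContinuousWithinAt u (Icc p q) p)
    (huv : ∀ x ∈ Ioo p q, HasDerivAt u (v x) x) (hv : Tendsto v (𝓝[>] p) (𝓝 e)) :
    HasDerivWithinAt u e (Icc p q) p := by
  refine (hasDerivWithinAt_Ici_of_tendsto_deriv (s := Ioo p q)
    (fun x hx ↦ (huv x hx).differentiableAt.differentiableWithinAt)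
    (hu.mono Ioo_subset_Icc_self) (Ioo_mem_nhdsGT hpq) (hv.congr' ?_)).mono Icc_subset_Ici_self
  filter_upwards [Ioo_mem_nhdsGT hpq] with x hx
  exact (huv x hx).deriv.symm

theorem continuousOn_Icc_of_tendsto_nhdsGT {X : Type*} [TopologicalSpace X] {p q : ℝ} {v : ℝ → X}
    (hv : ∀ x ∈ Ioc p q, ContinuousWithinAt v (Icc p q) x)
    (hlim : Tendsto v (𝓝[>] p) (𝓝 (v p))) : ContinuousOn v (Icc p q) := by
  intro x hx
  rcases hx.1.eq_or_lt with rfl | hpx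
  · exact (continuousWithinAt_Ioi_iff_Ici.1 hlim).mono Icc_subset_Ici_self
  · exact hv x ⟨hpx, hx.2⟩

variable {z₀ : ℝ} {m : ℕ} {a b f u : ℝ → ℝ}

theorem hasDerivWithinAt_div_pow {s : Set ℝ} {f' x : ℝ} (hx : x ≠ 0)
    (hf : HasDerivWithinAt f f' s x) :
    HasDerivWithinAt (fun y ↦ f y / y ^ (m + 2))
      ((f' - (m + 2) * x ^ (m + 1) * (f x / x ^ (m + 2))) / x ^ (m + 2)) s x := by
  refine (hf.div (hasDerivAt_pow (m + 2) x).hasDerivWithinAt (pow_ne_zero _ hx)).congr_deriv ?_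
  push_cast
  field_simp

section Bootstrap

variable (huf : ∀ x ∈ Ioc 0 z₀, HasDerivWithinAt u (f x / x ^ (m + 2)) (Icc 0 z₀) x)
  (hf : ∀ x ∈ Ioc 0 z₀,
    HasDerivWithinAt f (a x * (f x / x ^ (m + 2)) + b x) (Icc 0 z₀) x)

include huf hf

-- As the pole has order at least two, the new term `(m + 2) x ^ (m + 1)` vanishes at `0`, so the
-- sign of the leading coefficient at `0` survives differentiation.
theorem hasDerivWithinAt_derivWithin_of_div_pow {x : ℝ} (hx : x ∈ Ioc 0 z₀) :
    HasDerivWithinAt (derivWithin u (Icc 0 z₀))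
      (((a x - (m + 2) * x ^ (m + 1)) * derivWithin u (Icc 0 z₀) x + b x) / x ^ (m + 2))
      (Icc 0 z₀) x := by
  have hz₀ : 0 < z₀ := hx.1.trans_le hx.2
  have hderiv : ∀ y ∈ Ioc 0 z₀, derivWithin u (Icc 0 z₀) y = f y / y ^ (m + 2) := fun y hy ↦
    (huf y hy).derivWithin (uniqueDiffOn_Icc hz₀ y (Ioc_subset_Icc_self hy))
  refine ((hasDerivWithinAt_div_pow (m := m) hx.1.ne' (hf x hx)).congr_of_eventuallyEq ?_
    (hderiv x hx)).congr_deriv ?_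
  · filter_upwards [self_mem_nhdsWithin, mem_nhdsWithin_of_mem_nhds (Ioi_mem_nhds hx.1)]
      with y hy hy0 using hderiv y ⟨hy0, hy.2⟩
  · rw [hderiv x hx]
    ring

theorem contDiffOn_one_of_div_pow (hz₀ : 0 < z₀) (hu : ContinuousOn u (Icc 0 z₀))
    (ha : ContinuousOn a (Icc 0 z₀)) (hb : ContinuousOn b (Icc 0 z₀)) (ha0 : 0 < a 0) :
    ContDiffOn ℝ 1 u (Icc 0 z₀) := by
  have hmem : (0 : ℝ) ∈ Icc 0 z₀ := left_mem_Icc.2 hz₀.le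
  have huniq : UniqueDiffOn ℝ (Icc 0 z₀) := uniqueDiffOn_Icc hz₀
  have hle : 𝓝[>] (0 : ℝ) ≤ 𝓝[Icc 0 z₀] 0 := nhdsWithin_le_of_mem (Icc_mem_nhdsGT hz₀)
  have hu' : ∀ x ∈ Ioc 0 z₀, HasDerivWithinAt u (derivWithin u (Icc 0 z₀) x) (Icc 0 z₀) x :=
    fun x hx ↦ (huf x hx).differentiableWithinAt.hasDerivWithinAt
  have hode := fun x (hx : x ∈ Ioc 0 z₀) ↦
    hasDerivWithinAt_derivWithin_of_div_pow huf hf hx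
  have hlim : Tendsto (derivWithin u (Icc 0 z₀)) (𝓝[>] 0) (𝓝 (-b 0 / a 0)) := by
    have ha_lim : Tendsto (fun x ↦ a x - (m + 2) * x ^ (m + 1)) (𝓝[>] 0) (𝓝 (a 0)) := by
      have : ContinuousOn (fun x ↦ a x - (m + 2) * x ^ (m + 1)) (Icc 0 z₀) := by fun_prop
      simpa [ContinuousWithinAt] using (this 0 hmem).mono_left hle
    refine tendsto_neg_div_of_hasDerivAt_linear_div_pow m ha0 ha_lim ((hb 0 hmem).mono_left hle) ?_
    filter_upwards [Ioo_mem_nhdsGT hz₀] with x hx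
    exact (hode x (Ioo_subset_Ioc_self hx)).hasDerivAt (Icc_mem_nhds hx.1 hx.2)
  have hderiv_zero : HasDerivWithinAt u (-b 0 / a 0) (Icc 0 z₀) 0 :=
    hasDerivWithinAt_Icc_left_of_tendsto hz₀ (hu 0 hmem)
      (fun x hx ↦ (hu' x (Ioo_subset_Ioc_self hx)).hasDerivAt (Icc_mem_nhds hx.1 hx.2)) hlim
  rw [contDiffOn_one_iff_derivWithin huniq]
  constructor
  · intro x hx
    rcases hx.1.eq_or_lt with rfl | hx0
    · exact hderiv_zero.differentiableWithinAt
    · exact (hu' x ⟨hx0, hx.2⟩).differentiableWithinAt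
  · rw [← hderiv_zero.derivWithin (huniq 0 hmem)] at hlim
    exact continuousOn_Icc_of_tendsto_nhdsGT (fun x hx ↦ (hode x hx).continuousWithinAt) hlim

end Bootstrap

theorem contDiffOn_of_hasDerivWithinAt_linear_div_pow (hz₀ : 0 < z₀) {n : ℕ}
    (ha : ContDiffOn ℝ n a (Icc 0 z₀)) (hb : ContDiffOn ℝ n b (Icc 0 z₀)) (ha0 : 0 < a 0)
    (hu : ContinuousOn u (Icc 0 z₀))
    (hode : ∀ x ∈ Ioc 0 z₀,
      HasDerivWithinAt u ((a x * u x + b x) / x ^ (m + 2)) (Icc 0 z₀) x) :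
    ContDiffOn ℝ n u (Icc 0 z₀) := by
  induction n generalizing a b u with
  | zero => exact contDiffOn_zero.2 hu
  | succ n ih =>
    have hpred : (n : WithTop ℕ∞) ≤ (n + 1 : ℕ) := by exact_mod_cast n.le_succ
    have han := ha.of_le hpred
    have hun := ih han (hb.of_le hpred) ha0 hu hode
    have hn : ((n + 1 : ℕ) : WithTop ℕ∞) ≠ 0 := by exact_mod_cast n.succ_ne_zero
    have hn' : (n : WithTop ℕ∞) + 1 ≤ (n + 1 : ℕ) := by norm_cast
    have huniq : UniqueDiffOn ℝ (Icc 0 z₀) := uniqueDiffOn_Icc hz₀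
    have hbn : ContDiffOn ℝ n (fun x ↦ derivWithin a (Icc 0 z₀) x * u x
        + derivWithin b (Icc 0 z₀) x) (Icc 0 z₀) :=
      ((ha.derivWithin huniq hn').mul hun).add (hb.derivWithin huniq hn')
    have hrhs : ∀ x ∈ Ioc 0 z₀, HasDerivWithinAt (fun x ↦ a x * u x + b x)
        (a x * ((a x * u x + b x) / x ^ (m + 2))
          + (derivWithin a (Icc 0 z₀) x * u x + derivWithin b (Icc 0 z₀) x)) (Icc 0 z₀) x := by
      intro x hx
      have hxI := Ioc_subset_Icc_self hx
      exact (((ha.differentiableOn hn x hxI).hasDerivWithinAt.mul (hode x hx)).add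
        (hb.differentiableOn hn x hxI).hasDerivWithinAt).congr_deriv (by ring)
    have hu1 : ContDiffOn ℝ 1 u (Icc 0 z₀) :=
      contDiffOn_one_of_div_pow hode hrhs hz₀ hu han.continuousOn hbn.continuousOn ha0
    have hu' : ContDiffOn ℝ n (derivWithin u (Icc 0 z₀)) (Icc 0 z₀) :=
      ih (han.sub (by fun_prop)) hbn (by simpa using ha0)
        (hu1.continuousOn_derivWithin huniq le_rfl)
        fun x hx ↦ hasDerivWithinAt_derivWithin_of_div_pow hode hrhs hx
    exact (contDiffOn_succ_iff_derivWithin huniq).2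
      ⟨hu1.differentiableOn one_ne_zero, by simp, hu'⟩

theorem contDiffOn_of_hasDerivWithinAt_div_pow (hz₀ : 0 < z₀) {n : ℕ} {F : ℝ × ℝ → ℝ}
    (hF : ∀ x ∈ Icc 0 z₀, ContDiffAt ℝ n F (x, u x))
    (hF0 : 0 < fderiv ℝ F (0, u 0) (0, 1)) (hu : ContinuousOn u (Icc 0 z₀))
    (hode : ∀ x ∈ Ioc 0 z₀, HasDerivWithinAt u (F (x, u x) / x ^ (m + 2)) (Icc 0 z₀) x) :
    ContDiffOn ℝ n u (Icc 0 z₀) := by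
  induction n with
  | zero => exact contDiffOn_zero.2 hu
  | succ n ih =>
    have hpred : (n : WithTop ℕ∞) ≤ (n + 1 : ℕ) := by exact_mod_cast n.le_succ
    have hun := ih fun x hx ↦ (hF x hx).of_le hpred
    have hn : ((n + 1 : ℕ) : WithTop ℕ∞) ≠ 0 := by exact_mod_cast n.succ_ne_zero
    have hn' : (n : WithTop ℕ∞) + 1 ≤ (n + 1 : ℕ) := by norm_cast
    have hpartial (e : ℝ × ℝ) :
        ContDiffOn ℝ n (fun x ↦ fderiv ℝ F (x, u x) e) (Icc 0 z₀) := fun x hx ↦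
      (((hF x hx).fderiv_right hn').comp_contDiffWithinAt (f := fun x ↦ (x, u x)) x
        (contDiffWithinAt_id.prodMk (hun x hx))).clm_apply contDiffWithinAt_const
    have hrhs : ∀ x ∈ Ioc 0 z₀, HasDerivWithinAt (fun x ↦ F (x, u x))
        (fderiv ℝ F (x, u x) (0, 1) * (F (x, u x) / x ^ (m + 2)) + fderiv ℝ F (x, u x) (1, 0))
        (Icc 0 z₀) x := by
      intro x hx
      refine (((hF x (Ioc_subset_Icc_self hx)).differentiableAt hn).hasFDerivAt
        |>.comp_hasDerivWithinAt (f := fun x ↦ (x, u x)) x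
          ((hasDerivWithinAt_id x _).prodMk (hode x hx))).congr_deriv ?_
      generalize F (x, u x) / x ^ (m + 2) = t
      rw [show ((1 : ℝ), t) = t • (0, 1) + (1, 0) by simp, map_add, map_smul, smul_eq_mul, mul_comm]
    have huniq : UniqueDiffOn ℝ (Icc 0 z₀) := uniqueDiffOn_Icc hz₀
    have hu1 : ContDiffOn ℝ 1 u (Icc 0 z₀) := contDiffOn_one_of_div_pow hode hrhs hz₀ hu
      (hpartial _).continuousOn (hpartial _).continuousOn hF0
    have hu' : ContDiffOn ℝ n (derivWithin u (Icc 0 z₀)) (Icc 0 z₀) :=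
      contDiffOn_of_hasDerivWithinAt_linear_div_pow hz₀ ((hpartial (0, 1)).sub (by fun_prop))
        (hpartial (1, 0)) (by simpa using hF0) (hu1.continuousOn_derivWithin huniq le_rfl)
        fun x hx ↦ hasDerivWithinAt_derivWithin_of_div_pow hode hrhs hx
    exact (contDiffOn_succ_iff_derivWithin huniq).2
      ⟨hu1.differentiableOn one_ne_zero, by simp, hu'⟩

end SingularODE

theorem contDiffAt_one_sub_inv_sub_mul {n : WithTop ℕ∞} (k : ℝ) {p : ℝ × ℝ} (hp : p.2 ≠ 0) :
    ContDiffAt ℝ n (fun p : ℝ × ℝ ↦ 1 - p.2⁻¹ - k * p.1 * p.2) p := by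
  fun_prop (disch := assumption)

theorem fderiv_one_sub_inv_sub_mul (k : ℝ) {p : ℝ × ℝ} (hp : p.2 ≠ 0) :
    fderiv ℝ (fun p : ℝ × ℝ ↦ 1 - p.2⁻¹ - k * p.1 * p.2) p (0, 1) = (p.2 ^ 2)⁻¹ - k * p.1 := by
  obtain ⟨x, y⟩ := p
  have hslice : HasDerivAt (fun y ↦ 1 - y⁻¹ - k * x * y) ((y ^ 2)⁻¹ - k * x) y :=
    (((hasDerivAt_inv hp).const_sub 1).sub ((hasDerivAt_id y).const_mul (k * x))).congr_deriv
      (by ring)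
  exact (((contDiffAt_one_sub_inv_sub_mul k hp).differentiableAt one_ne_zero).hasFDerivAt
    |>.comp_hasDerivAt (f := fun y ↦ (x, y)) y
      ((hasDerivAt_const y x).prodMk (hasDerivAt_id y))).unique hslice

/-- The left maximal solution `g` of `(1 − (3/4) z g − z² g') g = 1` with
`g z₀ = g₀ > 0`, positive on `(0, z₀]`, extended to `z = 0` by `g 0 = 1`,
is `C^∞` on `[0, z₀]`. -/
theorem stmt_13 (z₀ g₀ : ℝ) (hz₀ : 0 < z₀) (hg₀ : 0 < g₀)
    (g : ℝ → ℝ) (hinit : g z₀ = g₀) (h0 : g 0 = 1)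
    (hpos : ∀ z ∈ Ioc (0 : ℝ) z₀, 0 < g z)
    (hsol : ∀ z ∈ Ioc (0 : ℝ) z₀, DifferentiableAt ℝ g z ∧
      (1 - 3 / 4 * z * g z - z ^ 2 * deriv g z) * g z = 1)
    (hlim : Tendsto g (nhdsWithin 0 (Ioi 0)) (nhds 1)) :
    ContDiffOn ℝ (⊤ : ℕ∞) g (Icc 0 z₀) := by
  have hne : ∀ x ∈ Icc 0 z₀, g x ≠ 0 := by
    intro x hx
    rcases hx.1.eq_or_lt with rfl | hx0
    · simp [h0]
    · exact (hpos x ⟨hx0, hx.2⟩).ne'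
  have hcont : ContinuousOn g (Icc 0 z₀) := continuousOn_Icc_of_tendsto_nhdsGT
    (fun x hx ↦ (hsol x hx).1.continuousAt.continuousWithinAt) (h0.symm ▸ hlim)
  have hode : ∀ x ∈ Ioc 0 z₀, HasDerivWithinAt g
      ((1 - (g x)⁻¹ - 3 / 4 * x * g x) / x ^ (0 + 2)) (Icc 0 z₀) x := by
    intro x hx
    have hx0 : x ≠ 0 := hx.1.ne'
    refine (hsol x hx).1.hasDerivAt.hasDerivWithinAt.congr_deriv ?_
    rw [← eq_inv_of_mul_eq_one_left (hsol x hx).2]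
    field_simp
    ring
  refine contDiffOn_infty.2 fun n ↦ contDiffOn_of_hasDerivWithinAt_div_pow
    (F := fun p ↦ 1 - p.2⁻¹ - 3 / 4 * p.1 * p.2) hz₀
    (fun x hx ↦ contDiffAt_one_sub_inv_sub_mul _ (hne x hx)) ?_ hcont hode
  rw [h0, fderiv_one_sub_inv_sub_mul _ one_ne_zero]
  norm_num
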